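/- arXiv:1008.2074 — 2 statements merged into one kernel-verified Lean document; each statement's English description precedes it below -/
import Mathlib

section
/- Let I = Q ∩ J be an ideal of a commutative Noetherian ring R such that √I = P is prime, Q is P-primary, and P ⊆ √J with √J ≠ P (so J has strictly larger height). If h ∈ R satisfies h ∉ P and h ∈ √J, then the saturation I : h^∞ equals Q. -/
/-- The saturation `I : h^∞ = ⋃ k, (I : h^k)`. -/
def Ideal.sat {R : Type*} [CommRing R] (I : Ideal R) (h : R) : Ideal R :=
  ⨆ k : ℕ, I.colon (Ideal.span {h ^ k})

/-! Saturation commutes with binary intersections. A `P`-primary ideal is saturated with respect to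
any `h ∉ P`, and an ideal whose radical contains `h` saturates to the whole ring; hence
`(Q ∩ J) : h^∞ = (Q : h^∞) ∩ (J : h^∞) = Q ∩ R = Q`. -/

section Saturation

variable {R : Type*} [CommRing R] {I J Q : Ideal R} {h x : R}

theorem monotone_colon_span_pow (I : Ideal R) (h : R) :
    Monotone fun k : ℕ ↦ I.colon (Ideal.span {h ^ k}) := fun _ _ hkl ↦
  Submodule.colon_mono le_rfl <|
    Ideal.span_singleton_le_span_singleton.mpr (pow_dvd_pow h hkl)

theorem mem_sat_iff : x ∈ I.sat h ↔ ∃ k : ℕ, x * h ^ k ∈ I := by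
  rw [Ideal.sat, Submodule.mem_iSup_of_directed _ (monotone_colon_span_pow I h).directed_le]
  exact exists_congr fun _ ↦ Submodule.mem_colon_span_singleton

theorem le_sat (I : Ideal R) (h : R) : I ≤ I.sat h := fun _ hx ↦
  mem_sat_iff.mpr ⟨0, I.mul_mem_right _ hx⟩

theorem sat_inf (I J : Ideal R) (h : R) : (I ⊓ J).sat h = I.sat h ⊓ J.sat h := by
  ext x
  simp only [Submodule.mem_inf, mem_sat_iff]
  constructor
  · rintro ⟨k, hI, hJ⟩
    exact ⟨⟨k, hI⟩, ⟨k, hJ⟩⟩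
  · rintro ⟨⟨k, hI⟩, ⟨l, hJ⟩⟩
    exact ⟨max k l, I.mem_of_dvd (mul_dvd_mul_left x (pow_dvd_pow h (le_max_left k l))) hI,
      J.mem_of_dvd (mul_dvd_mul_left x (pow_dvd_pow h (le_max_right k l))) hJ⟩

theorem sat_eq_top_iff : I.sat h = ⊤ ↔ h ∈ I.radical := by
  simp only [Ideal.eq_top_iff_one, mem_sat_iff, one_mul, Ideal.mem_radical_iff]

theorem sat_eq_self_of_isPrimary (hQ : Q.IsPrimary) (hh : h ∉ Q.radical) : Q.sat h = Q := by
  refine le_antisymm (fun x hx ↦ ?_) (le_sat Q h)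
  obtain ⟨k, hk⟩ := mem_sat_iff.mp hx
  exact ((Ideal.isPrimary_iff.mp hQ).2 hk).resolve_right
    fun hpow ↦ hh (Ideal.mem_radical_of_pow_mem hpow)

end Saturation

theorem stmt_10_general {R : Type*} [CommRing R] {Q J : Ideal R} {h : R}
    (hQ : Q.IsPrimary) (hhQ : h ∉ Q.radical) (hhJ : h ∈ J.radical) :
    (Q ⊓ J).sat h = Q := by
  rw [sat_inf, sat_eq_self_of_isPrimary hQ hhQ, sat_eq_top_iff.mpr hhJ, inf_top_eq]

theorem stmt_10 {R : Type*} [CommRing R] [IsNoetherianRing R]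
    (I Q J P : Ideal R) (hI : I = Q ⊓ J) (hP : P.IsPrime)
    (hrad : I.radical = P) (hQ : Q.IsPrimary) (hQrad : Q.radical = P)
    (hPJ : P ≤ J.radical) (hJP : J.radical ≠ P)
    (h : R) (hh1 : h ∉ P) (hh2 : h ∈ J.radical) :
    I.sat h = Q :=
  hI ▸ stmt_10_general hQ (hQrad ▸ hh1) hh2
end

section
/- Let I ⊆ ℤ[x₁,…,xₙ] be an ideal with I ∩ ℤ = ⟨0⟩, and let h be a nonzero integer such that I : h^∞ = I : h^m for some natural number m. Then I = (I : h^m) ∩ ⟨I, h^m⟩. -/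
open MvPolynomial

/-!
By the modular law, `(I : h^m) ⊓ (I ⊔ ⟨h^m⟩) = I ⊔ (⟨h^m⟩ ⊓ (I : h^m))`, so it suffices that a
multiple `q * h^m` lying in `I : h^m` lies in `I`. Such a `q` satisfies `q * h^(2m) ∈ I`, so it
belongs to the saturation, which is `I : h^m`.
-/

theorem span_singleton_inf_colon_le {R : Type*} [CommSemiring R] {I : Ideal R} {x : R}
    (hx : I.colon (Ideal.span {x ^ 2}) ≤ I.colon (Ideal.span {x})) :
    Ideal.span {x} ⊓ I.colon (Ideal.span {x}) ≤ I := by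
  rintro _ ⟨hspan, hcolon⟩
  obtain ⟨q, rfl⟩ := Ideal.mem_span_singleton'.1 hspan
  have hq_sq : q * x ^ 2 ∈ I := by
    simpa only [pow_two, mul_assoc] using Ideal.mem_colon_span_singleton.1 hcolon
  exact Ideal.mem_colon_span_singleton.1 (hx (Ideal.mem_colon_span_singleton.2 hq_sq))

section CommRing

variable {R : Type*} [CommRing R] {I : Ideal R}

theorem eq_colon_inf_sup_span_singleton {x : R}
    (hx : I.colon (Ideal.span {x ^ 2}) ≤ I.colon (Ideal.span {x})) :
    I = I.colon (Ideal.span {x}) ⊓ (I ⊔ Ideal.span {x}) :=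
  calc
    I = I ⊔ Ideal.span {x} ⊓ I.colon (Ideal.span {x}) :=
      (sup_eq_left.2 (span_singleton_inf_colon_le hx)).symm
    _ = (I ⊔ Ideal.span {x}) ⊓ I.colon (Ideal.span {x}) :=
      (sup_inf_assoc_of_le _ Ideal.le_colon).symm
    _ = I.colon (Ideal.span {x}) ⊓ (I ⊔ Ideal.span {x}) := inf_comm _ _

theorem colon_span_pow_le_sat (I : Ideal R) (h : R) (k : ℕ) :
    I.colon (Ideal.span {h ^ k}) ≤ I.sat h :=
  le_iSup (fun k : ℕ ↦ I.colon (Ideal.span {h ^ k})) k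

theorem stmt_12_general {h : R} {m : ℕ}
    (hsat : I.sat h = I.colon (Ideal.span {h ^ m})) :
    I = I.colon (Ideal.span {h ^ m}) ⊓ (I ⊔ Ideal.span {h ^ m}) := by
  apply eq_colon_inf_sup_span_singleton
  rw [← hsat, ← pow_mul]
  exact colon_span_pow_le_sat I h (m * 2)

end CommRing

theorem stmt_12 (n : ℕ) (I : Ideal (MvPolynomial (Fin n) ℤ))
    (hI : ∀ a : ℤ, (C a : MvPolynomial (Fin n) ℤ) ∈ I → a = 0)
    (h : ℤ) (hh : h ≠ 0) (m : ℕ)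
    (hsat : I.sat (C h) = I.colon (Ideal.span {(C h : MvPolynomial (Fin n) ℤ) ^ m})) :
    I = I.colon (Ideal.span {(C h : MvPolynomial (Fin n) ℤ) ^ m}) ⊓
          (I ⊔ Ideal.span {(C h : MvPolynomial (Fin n) ℤ) ^ m}) :=
  stmt_12_general hsat
end
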